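/- No re-entry during a pending call of Memo-la (Lemma 7): For every run s of an execution of Memo-la and every index ℓ ∈ {0, …, |s|−1} with s[ℓ] = C(q, i), neither C(q, i) nor M(q, i) appears in the subsequence s[ℓ+1] … s[φ_s(ℓ)]. -/

import Mathlib

namespace RegexMemo

/-! ## Generic runs, `φ`, `sub`, `sub*` -/

variable {α : Type}

/-- `φ_s(ℓ, n)`: the index of the result value of the call at index `ℓ`. -/
def phiAux (isRet : α → Bool) (s : List α) (ℓ n : ℕ) : Option ℕ :=
  match h : s[ℓ]? with
  | none => none
  | some e =>
    if isRet e then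
      if n ≤ 1 then some ℓ
      else phiAux isRet s (ℓ + 1) (n - 1)
    else phiAux isRet s (ℓ + 1) (n + 1)
termination_by s.length - ℓ
decreasing_by
  all_goals
    have hl : ℓ < s.length := by
      by_contra hc
      have : s[ℓ]? = none := List.getElem?_eq_none (by omega)
      simp [this] at h
    omega

/-- `φ_s(ℓ) = φ_s(ℓ, 0)`. -/
def phi (isRet : α → Bool) (s : List α) (ℓ : ℕ) : Option ℕ := phiAux isRet s ℓ 0

/-- `sub(s, ℓ)`: replace the memoization-table invocation at index `ℓ` (an element
`M(q,i)` together with its immediately following result) by `C(q,i)` followed by the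
subsequence `s[ℓ'+1] … s[φ_s(ℓ')]`, where `ℓ'` is the first index with `s[ℓ'] = C(q,i)`.
Here `m2c` maps a memoization element `M(q,i)` to the corresponding call element `C(q,i)`
(and everything else to `none`), and `isRet` recognizes result elements. -/
def subExpand [DecidableEq α] (m2c : α → Option α) (isRet : α → Bool)
    (s : List α) (ℓ : ℕ) : Option (List α) :=
  match s[ℓ]? with
  | some e =>
    match m2c e with
    | some c =>
      match s.findIdx? (· == c) with
      | some ℓ' =>
        match phi isRet s ℓ' with
        | some m =>
          some (s.take ℓ ++ [c] ++ ((s.drop (ℓ' + 1)).take (m - ℓ')) ++ s.drop (ℓ + 2))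
        | none => none
      | none => none
    | none => none
  | none => none

/-- `sub*`: repeatedly locate the first memoization element and expand it,
until no memoization element remains. `SubStar m2c isRet s t` means `sub*(s) = t`. -/
inductive SubStar [DecidableEq α] (m2c : α → Option α) (isRet : α → Bool) :
    List α → List α → Prop where
  | done {s : List α} : s.findIdx? (fun e => (m2c e).isSome) = none →
      SubStar m2c isRet s s
  | step {s s' t : List α} {ℓ : ℕ} :
      s.findIdx? (fun e => (m2c e).isSome) = some ℓ →
      subExpand m2c isRet s ℓ = some s' →
      SubStar m2c isRet s' t →
      SubStar m2c isRet s t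

/-- The number of (recursive) calls recorded in a run: the number of `C`/`M` elements. -/
def callCount (isCall : α → Bool) (s : List α) : ℕ := (s.filter isCall).length

variable {Sigma S : Type}

/-- Results of backtracking matching: `SuccessAt i'` or `Failure`. -/
inductive Result : Type where
  | successAt : ℕ → Result
  | failure : Result
deriving DecidableEq

/-! ## Plain NFAs -/

/-- Transitions of a plain NFA. -/
inductive Trans (Sigma S : Type) : Type where
  | eps : S → Trans Sigma S
  | branch : S → S → Trans Sigma S
  | char : Sigma → S → Trans Sigma S

/-- A (plain) NFA over the alphabet `Sigma` with (finite) state type `S`: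
an initial state, a set of accepting states, and a transition function
(whose value is only relevant on non-accepting states). -/
structure NFA (Sigma S : Type) where
  q0 : S
  F : Set S
  T : S → Trans Sigma S

/-- One ε-step: an `Eps` or `Branch` transition of a non-accepting state. -/
def NFA.epsStep (A : NFA Sigma S) (q q' : S) : Prop :=
  q ∉ A.F ∧ (A.T q = Trans.eps q' ∨ (∃ q'', A.T q = Trans.branch q' q'') ∨
    (∃ q'', A.T q = Trans.branch q'' q'))

/-- The NFA has no ε-loops. -/
def NFA.NoEpsLoops (A : NFA Sigma S) : Prop :=
  ∀ q : S, ¬ Relation.TransGen A.epsStep q q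

open Classical in
/-- The in-degree `#in(q)` of a state of a plain NFA. -/
noncomputable def NFA.inDeg [Fintype S] (A : NFA Sigma S) (q : S) : ℕ :=
  (Finset.univ.filter fun q' : S => q' ∉ A.F ∧ A.T q' = Trans.eps q).card +
  (Finset.univ.filter fun q' : S => q' ∉ A.F ∧ ∃ σ, A.T q' = Trans.char σ q).card +
  (Finset.univ.filter fun q' : S => q' ∉ A.F ∧ ∃ q'', A.T q' = Trans.branch q q'').card +
  (Finset.univ.filter fun q' : S => q' ∉ A.F ∧ ∃ q'', A.T q' = Trans.branch q'' q).card +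
  (if q = A.q0 then 1 else 0)

/-- The maximal in-degree `#in(A)` of a plain NFA. -/
noncomputable def NFA.inDegMax [Fintype S] (A : NFA Sigma S) : ℕ :=
  Finset.univ.sup fun q : S => A.inDeg q

/-- Elements of runs of `Match`/`Memo`: calls `C(q,i)`, memoization-table invocations
`M(q,i)`, and results `S(i')` and `F`. -/
inductive RunElem (S : Type) : Type where
  | call : S → ℕ → RunElem S
  | memo : S → ℕ → RunElem S
  | succ : ℕ → RunElem S
  | fail : RunElem S
deriving DecidableEq

/-- The run element recording the return of a result. -/
def Result.elem {S : Type} : Result → RunElem S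
  | .successAt i => .succ i
  | .failure => .fail

def RunElem.isRet : RunElem S → Bool
  | .succ _ => true
  | .fail => true
  | _ => false

def RunElem.isCall : RunElem S → Bool
  | .call _ _ => true
  | .memo _ _ => true
  | _ => false

/-- `M(q,i) ↦ C(q,i)`. -/
def memoToCall : RunElem S → Option (RunElem S)
  | .memo q i => some (.call q i)
  | _ => none

/-- Big-step semantics (together with the produced run) of the backtracking
matching algorithm `Match` for plain NFAs:
`MatchRun A w q i r s` means the call `Match_{A,w}(q, i)` terminates with
result `r` and produces the run `s`. -/
inductive MatchRun (A : NFA Sigma S) (w : List Sigma) :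
    S → ℕ → Result → List (RunElem S) → Prop where
  | accept {q : S} {i : ℕ} : q ∈ A.F →
      MatchRun A w q i (.successAt i) [.call q i, .succ i]
  | eps {q q' : S} {i : ℕ} {r : Result} {s : List (RunElem S)} :
      q ∉ A.F → A.T q = Trans.eps q' →
      MatchRun A w q' i r s →
      MatchRun A w q i r (.call q i :: s ++ [r.elem])
  | branchSucc {q q' q'' : S} {i i' : ℕ} {s : List (RunElem S)} :
      q ∉ A.F → A.T q = Trans.branch q' q'' →
      MatchRun A w q' i (.successAt i') s →
      MatchRun A w q i (.successAt i') (.call q i :: s ++ [RunElem.succ i'])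
  | branchFail {q q' q'' : S} {i : ℕ} {r : Result} {s s' : List (RunElem S)} :
      q ∉ A.F → A.T q = Trans.branch q' q'' →
      MatchRun A w q' i .failure s →
      MatchRun A w q'' i r s' →
      MatchRun A w q i r (.call q i :: s ++ s' ++ [r.elem])
  | charSucc {q q' : S} {σ : Sigma} {i : ℕ} {r : Result} {s : List (RunElem S)} :
      q ∉ A.F → A.T q = Trans.char σ q' →
      w[i]? = some σ →
      MatchRun A w q' (i + 1) r s →
      MatchRun A w q i r (.call q i :: s ++ [r.elem])
  | charFail {q q' : S} {σ : Sigma} {i : ℕ} :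
      q ∉ A.F → A.T q = Trans.char σ q' →
      w[i]? ≠ some σ →
      MatchRun A w q i .failure [.call q i, .fail]

/-- Record `M(q,i) := Failure` in the memoization table if the result is a failure. -/
def recFail [DecidableEq S] (M : S × ℕ → Bool) (q : S) (i : ℕ) : Result → (S × ℕ → Bool)
  | .failure => fun p => if p = (q, i) then true else M p
  | _ => M

/-- Big-step semantics (with resulting memoization table and produced run) of the
memoized backtracking matching algorithm `Memo` for plain NFAs:
`MemoRun A w q i M M' r s` means the call `Memo^M_{A,w}(q, i)` terminates with result
`r`, final memoization table `M'` (where `M p = true` means `Failure` is recorded at the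
key `p`), and produces the run `s`. -/
inductive MemoRun [DecidableEq S] (A : NFA Sigma S) (w : List Sigma) :
    S → ℕ → (S × ℕ → Bool) → (S × ℕ → Bool) → Result → List (RunElem S) → Prop where
  | memoHit {q : S} {i : ℕ} {M : S × ℕ → Bool} : M (q, i) = true →
      MemoRun A w q i M M .failure [.memo q i, .fail]
  | accept {q : S} {i : ℕ} {M : S × ℕ → Bool} : M (q, i) = false → q ∈ A.F →
      MemoRun A w q i M M (.successAt i) [.call q i, .succ i]
  | eps {q q' : S} {i : ℕ} {M M' : S × ℕ → Bool} {r : Result} {s : List (RunElem S)} :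
      M (q, i) = false → q ∉ A.F → A.T q = Trans.eps q' →
      MemoRun A w q' i M M' r s →
      MemoRun A w q i M (recFail M' q i r) r (.call q i :: s ++ [r.elem])
  | branchSucc {q q' q'' : S} {i i' : ℕ} {M M' : S × ℕ → Bool} {s : List (RunElem S)} :
      M (q, i) = false → q ∉ A.F → A.T q = Trans.branch q' q'' →
      MemoRun A w q' i M M' (.successAt i') s →
      MemoRun A w q i M M' (.successAt i') (.call q i :: s ++ [RunElem.succ i'])
  | branchFail {q q' q'' : S} {i : ℕ} {M M' M'' : S × ℕ → Bool} {r : Result}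
      {s s' : List (RunElem S)} :
      M (q, i) = false → q ∉ A.F → A.T q = Trans.branch q' q'' →
      MemoRun A w q' i M M' .failure s →
      MemoRun A w q'' i M' M'' r s' →
      MemoRun A w q i M (recFail M'' q i r) r (.call q i :: s ++ s' ++ [r.elem])
  | charSucc {q q' : S} {σ : Sigma} {i : ℕ} {M M' : S × ℕ → Bool} {r : Result}
      {s : List (RunElem S)} :
      M (q, i) = false → q ∉ A.F → A.T q = Trans.char σ q' →
      w[i]? = some σ →
      MemoRun A w q' (i + 1) M M' r s →
      MemoRun A w q i M (recFail M' q i r) r (.call q i :: s ++ [r.elem])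
  | charFail {q q' : S} {σ : Sigma} {i : ℕ} {M : S × ℕ → Bool} :
      M (q, i) = false → q ∉ A.F → A.T q = Trans.char σ q' →
      w[i]? ≠ some σ →
      MemoRun A w q i M (recFail M q i .failure) .failure [.call q i, .fail]

/-! ## NFAs with sub-automata -/

/-- Kind labels of sub-automaton transitions: positive/negative look-ahead/look-behind
and atomic grouping. -/
inductive Kind : Type where
  | pla | nla | plb | nlb | at
deriving DecidableEq

mutual
/-- An NFA with sub-automata `⟨Q, q0, F, T⟩`: a list of top-level states, an initial
state, accepting states, and a transition function (relevant on non-accepting top-level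
states) whose transitions may be labelled with further NFAs with sub-automata. -/
inductive SubNFA (Sigma S : Type) : Type where
  | mk : List S → S → List S → (S → SubTrans Sigma S) → SubNFA Sigma S

/-- Transitions of an NFA with sub-automata. -/
inductive SubTrans (Sigma S : Type) : Type where
  | eps : S → SubTrans Sigma S
  | branch : S → S → SubTrans Sigma S
  | char : Sigma → S → SubTrans Sigma S
  | sub : Kind → SubNFA Sigma S → S → SubTrans Sigma S
end

/-- Top-level states `Q`. -/
def SubNFA.Q : SubNFA Sigma S → List S
  | .mk Q _ _ _ => Q

/-- Initial state `q0`. -/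
def SubNFA.q0 : SubNFA Sigma S → S
  | .mk _ q0 _ _ => q0

/-- Accepting states `F`. -/
def SubNFA.F : SubNFA Sigma S → List S
  | .mk _ _ F _ => F

/-- Transition function `T`. -/
def SubNFA.T : SubNFA Sigma S → S → SubTrans Sigma S
  | .mk _ _ _ T => T

mutual
/-- All automata occurring within an NFA with sub-automata (including itself), each
together with its nesting depth of atomic grouping (the number of enclosing
`at`-sub-automaton boundaries). -/
def SubNFA.compsD : SubNFA Sigma S → List (SubNFA Sigma S × ℕ)
  | .mk Q q0 F T => (.mk Q q0 F T, 0) :: Q.flatMap (fun q => SubTrans.subCompsD (T q))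

def SubTrans.subCompsD : SubTrans Sigma S → List (SubNFA Sigma S × ℕ)
  | .sub k A' _ => (SubNFA.compsD A').map (fun p => (p.1, p.2 + (if k = Kind.at then 1 else 0)))
  | _ => []
end

/-- All automata occurring within `A` (including `A` itself). -/
def SubNFA.comps (A : SubNFA Sigma S) : List (SubNFA Sigma S) :=
  A.compsD.map Prod.fst

/-- The set (list) of all states `P` occurring within `A`. -/
def SubNFA.allStates (A : SubNFA Sigma S) : List S :=
  A.comps.flatMap SubNFA.Q

/-- The nesting depth of atomic grouping `ν_A(q)` of a state `q` of `A`. -/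
def SubNFA.nu [DecidableEq S] (A : SubNFA Sigma S) (q : S) : ℕ :=
  (A.compsD.map (fun p => if q ∈ p.1.Q then p.2 else 0)).sum

/-- The maximal nesting depth of atomic grouping `ν(A)`. -/
def SubNFA.nuMax [DecidableEq S] (A : SubNFA Sigma S) : ℕ :=
  (A.allStates.map A.nu).foldr max 0

/-- Local wellformedness of one automaton: the initial state is a top-level state,
accepting states are top-level states, and transitions of non-accepting top-level
states lead to top-level states. -/
def SubNFA.LocalOK (B : SubNFA Sigma S) : Prop :=
  B.q0 ∈ B.Q ∧ (∀ f ∈ B.F, f ∈ B.Q) ∧ ∀ q ∈ B.Q, q ∉ B.F →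
    match B.T q with
    | .eps q' => q' ∈ B.Q
    | .branch q' q'' => q' ∈ B.Q ∧ q'' ∈ B.Q
    | .char _ q' => q' ∈ B.Q
    | .sub _ _ q' => q' ∈ B.Q

/-- Wellformedness of an NFA with sub-automata: every component automaton is locally
wellformed, and all the state lists are disjoint and duplicate-free (so that `P` is
the disjoint union of the top-level state sets of all components). -/
def SubNFA.WF (A : SubNFA Sigma S) : Prop :=
  (∀ B ∈ A.comps, B.LocalOK) ∧ A.allStates.Nodup

/-- The kind labels of all sub-automaton transitions occurring in `A`. -/
def SubNFA.kinds [DecidableEq S] (A : SubNFA Sigma S) : List Kind :=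
  A.comps.flatMap fun B =>
    (B.Q.filter (fun q => decide (q ∉ B.F))).filterMap fun q =>
      match B.T q with
      | .sub k _ _ => some k
      | _ => none

/-- A la-NFA: all kind labels are look-around labels (for simplicity, only positive
look-ahead `pla` is treated). -/
def SubNFA.IsLaNFA [DecidableEq S] (A : SubNFA Sigma S) : Prop :=
  ∀ k ∈ A.kinds, k = Kind.pla

/-- An at-NFA: all kind labels are `at` (atomic grouping). -/
def SubNFA.IsAtNFA [DecidableEq S] (A : SubNFA Sigma S) : Prop :=
  ∀ k ∈ A.kinds, k = Kind.at

/-- A (la,at)-NFA in which (for simplicity) only the kinds `pla` and `at` occur. -/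
def SubNFA.IsLaAtNFA [DecidableEq S] (A : SubNFA Sigma S) : Prop :=
  ∀ k ∈ A.kinds, k = Kind.pla ∨ k = Kind.at

/-- One global ε-step of an NFA with sub-automata: an `Eps` or `Branch` transition, or a
`Sub` transition with a look-around kind (from the transition's source to its successor),
of a non-accepting top-level state of any component automaton. -/
def SubNFA.epsStep (A : SubNFA Sigma S) (q q' : S) : Prop :=
  ∃ B ∈ A.comps, q ∈ B.Q ∧ q ∉ B.F ∧
    (B.T q = SubTrans.eps q' ∨
     (∃ q'', B.T q = SubTrans.branch q' q'') ∨
     (∃ q'', B.T q = SubTrans.branch q'' q') ∨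
     (∃ k A'', B.T q = SubTrans.sub k A'' q' ∧ k ≠ Kind.at))

/-- The NFA with sub-automata has no ε-loops. -/
def SubNFA.NoEpsLoops (A : SubNFA Sigma S) : Prop :=
  ∀ q : S, ¬ Relation.TransGen A.epsStep q q

/-- All pairs (state, transition) of non-accepting top-level states of all component
automata of `A`. -/
def SubNFA.allTransNF [DecidableEq S] (A : SubNFA Sigma S) : List (S × SubTrans Sigma S) :=
  A.comps.flatMap fun B => (B.Q.filter (fun q => decide (q ∉ B.F))).map fun q => (q, B.T q)

/-- How many of the buckets in the definition of the in-degree of `q` a given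
transition contributes to. -/
def SubTrans.hits [DecidableEq S] (t : SubTrans Sigma S) (q : S) : ℕ :=
  match t with
  | .eps q' => if q' = q then 1 else 0
  | .char _ q' => if q' = q then 1 else 0
  | .branch q' q'' => (if q' = q then 1 else 0) + (if q'' = q then 1 else 0)
  | .sub _ _ q' => if q' = q then 1 else 0

/-- The in-degree `#in(q)` of a state of an NFA with sub-automata. -/
def SubNFA.inDeg [DecidableEq S] (A : SubNFA Sigma S) (q : S) : ℕ :=
  (A.allTransNF.map (fun p => p.2.hits q)).sum +
  (if q ∈ A.comps.map SubNFA.q0 then 1 else 0)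

/-- The maximal in-degree `#in(A)`. -/
def SubNFA.inDegMax [DecidableEq S] (A : SubNFA Sigma S) : ℕ :=
  (A.allStates.map A.inDeg).foldr max 0

/-! ## run elements for `Memo-la` and `Match-(la,at)` -/

/-- Elements of runs of `Memo-la` (and of `Match-(la,at)`): calls `C(q,i)`,
memoization-table invocations `M(q,i)`, and the results `S(i')`, `S'` (bare success),
and `F`. -/
inductive LaRunElem (S : Type) : Type where
  | call : S → ℕ → LaRunElem S
  | memo : S → ℕ → LaRunElem S
  | succAt : ℕ → LaRunElem S
  | succ : LaRunElem S
  | fail : LaRunElem S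
deriving DecidableEq

def LaRunElem.isRet : LaRunElem S → Bool
  | .succAt _ => true
  | .succ => true
  | .fail => true
  | _ => false

def LaRunElem.isCall : LaRunElem S → Bool
  | .call _ _ => true
  | .memo _ _ => true
  | _ => false

def laMemoToCall : LaRunElem S → Option (LaRunElem S)
  | .memo q i => some (.call q i)
  | _ => none

def Result.laElem {S : Type} : Result → LaRunElem S
  | .successAt i => .succAt i
  | .failure => .fail

/-! ## The backtracking matching algorithm `Match-(la,at)` -/

/-- Big-step semantics (with produced run) of the backtracking matching algorithm
`Match-(la,at)` for NFAs with sub-automata: `LAMatchRun w A q i r s` means the call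
`Match-(la,at)_{A,w}(q, i)` terminates with result `r` and produces the run `s`.
For simplicity, only the look-around kind `pla` (besides `at`) is treated. -/
inductive LAMatchRun (w : List Sigma) :
    SubNFA Sigma S → S → ℕ → Result → List (LaRunElem S) → Prop where
  | accept {A : SubNFA Sigma S} {q : S} {i : ℕ} : q ∈ A.F →
      LAMatchRun w A q i (.successAt i) [.call q i, .succAt i]
  | eps {A : SubNFA Sigma S} {q q' : S} {i : ℕ} {r : Result} {s : List (LaRunElem S)} :
      q ∉ A.F → A.T q = SubTrans.eps q' →
      LAMatchRun w A q' i r s →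
      LAMatchRun w A q i r (.call q i :: s ++ [r.laElem])
  | branchSucc {A : SubNFA Sigma S} {q q' q'' : S} {i i' : ℕ} {s : List (LaRunElem S)} :
      q ∉ A.F → A.T q = SubTrans.branch q' q'' →
      LAMatchRun w A q' i (.successAt i') s →
      LAMatchRun w A q i (.successAt i') (.call q i :: s ++ [LaRunElem.succAt i'])
  | branchFail {A : SubNFA Sigma S} {q q' q'' : S} {i : ℕ} {r : Result}
      {s s' : List (LaRunElem S)} :
      q ∉ A.F → A.T q = SubTrans.branch q' q'' →
      LAMatchRun w A q' i .failure s →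
      LAMatchRun w A q'' i r s' →
      LAMatchRun w A q i r (.call q i :: s ++ s' ++ [r.laElem])
  | charSucc {A : SubNFA Sigma S} {q q' : S} {σ : Sigma} {i : ℕ} {r : Result}
      {s : List (LaRunElem S)} :
      q ∉ A.F → A.T q = SubTrans.char σ q' →
      w[i]? = some σ →
      LAMatchRun w A q' (i + 1) r s →
      LAMatchRun w A q i r (.call q i :: s ++ [r.laElem])
  | charFail {A : SubNFA Sigma S} {q q' : S} {σ : Sigma} {i : ℕ} :
      q ∉ A.F → A.T q = SubTrans.char σ q' →
      w[i]? ≠ some σ →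
      LAMatchRun w A q i .failure [.call q i, .fail]
  | plaSucc {A A' : SubNFA Sigma S} {q q' : S} {i i' : ℕ} {r : Result}
      {s1 s2 : List (LaRunElem S)} :
      q ∉ A.F → A.T q = SubTrans.sub Kind.pla A' q' →
      LAMatchRun w A' A'.q0 i (.successAt i') s1 →
      LAMatchRun w A q' i r s2 →
      LAMatchRun w A q i r (.call q i :: s1 ++ s2 ++ [r.laElem])
  | plaFail {A A' : SubNFA Sigma S} {q q' : S} {i : ℕ} {s1 : List (LaRunElem S)} :
      q ∉ A.F → A.T q = SubTrans.sub Kind.pla A' q' →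
      LAMatchRun w A' A'.q0 i .failure s1 →
      LAMatchRun w A q i .failure (.call q i :: s1 ++ [LaRunElem.fail])
  | atSucc {A A' : SubNFA Sigma S} {q q' : S} {i i' : ℕ} {r : Result}
      {s1 s2 : List (LaRunElem S)} :
      q ∉ A.F → A.T q = SubTrans.sub Kind.at A' q' →
      LAMatchRun w A' A'.q0 i (.successAt i') s1 →
      LAMatchRun w A q' i' r s2 →
      LAMatchRun w A q i r (.call q i :: s1 ++ s2 ++ [r.laElem])
  | atFail {A A' : SubNFA Sigma S} {q q' : S} {i : ℕ} {s1 : List (LaRunElem S)} :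
      q ∉ A.F → A.T q = SubTrans.sub Kind.at A' q' →
      LAMatchRun w A' A'.q0 i .failure s1 →
      LAMatchRun w A q i .failure (.call q i :: s1 ++ [LaRunElem.fail])

/-! ## `Memo-la` -/

/-- Values of the memoization table of `Memo-la`: `Failure` or `Success`. -/
inductive LaVal : Type where
  | success : LaVal
  | failure : LaVal
deriving DecidableEq

/-- Results of `Memo-la`: `SuccessAt i'`, bare `Success`, or `Failure`. -/
inductive LaResult : Type where
  | successAt : ℕ → LaResult
  | success : LaResult
  | failure : LaResult
deriving DecidableEq

def LaVal.toResult : LaVal → LaResult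
  | .success => .success
  | .failure => .failure

def LaResult.elem {S : Type} : LaResult → LaRunElem S
  | .successAt i => .succAt i
  | .success => .succ
  | .failure => .fail

def Result.toLa : Result → LaResult
  | .successAt i => .successAt i
  | .failure => .failure

/-- The final recording of `Memo-la`: `M(q,i) := Success` if the result is
`SuccessAt i'` or `Success`, and `M(q,i) := Failure` if the result is `Failure`. -/
def laRecord [DecidableEq S] (M : S × ℕ → Option LaVal) (q : S) (i : ℕ) (r : LaResult) :
    S × ℕ → Option LaVal :=
  fun p => if p = (q, i) then
    some (match r with | .failure => LaVal.failure | _ => LaVal.success)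
  else M p

/-- Big-step semantics (with resulting memoization table and produced run) of the
memoized backtracking matching algorithm `Memo-la` for la-NFAs:
`MemoLaRun w A q i M M' r s` means the call `Memo-la^M_{A,w}(q, i)` terminates with
result `r`, final memoization table `M'`, and produces the run `s`. The memoization
table is shared between the top-level automaton and all sub-automata. -/
inductive MemoLaRun [DecidableEq S] (w : List Sigma) :
    SubNFA Sigma S → S → ℕ → (S × ℕ → Option LaVal) → (S × ℕ → Option LaVal) →
    LaResult → List (LaRunElem S) → Prop where
  | memoHit {A : SubNFA Sigma S} {q : S} {i : ℕ} {M : S × ℕ → Option LaVal} {v : LaVal} :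
      M (q, i) = some v →
      MemoLaRun w A q i M M v.toResult [.memo q i, v.toResult.elem]
  | accept {A : SubNFA Sigma S} {q : S} {i : ℕ} {M : S × ℕ → Option LaVal} :
      M (q, i) = none → q ∈ A.F →
      MemoLaRun w A q i M (laRecord M q i (.successAt i)) (.successAt i)
        [.call q i, .succAt i]
  | eps {A : SubNFA Sigma S} {q q' : S} {i : ℕ} {M M' : S × ℕ → Option LaVal}
      {r : LaResult} {s : List (LaRunElem S)} :
      M (q, i) = none → q ∉ A.F → A.T q = SubTrans.eps q' →
      MemoLaRun w A q' i M M' r s →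
      MemoLaRun w A q i M (laRecord M' q i r) r (.call q i :: s ++ [r.elem])
  | branchNoFail {A : SubNFA Sigma S} {q q' q'' : S} {i : ℕ}
      {M M' : S × ℕ → Option LaVal} {r : LaResult} {s : List (LaRunElem S)} :
      M (q, i) = none → q ∉ A.F → A.T q = SubTrans.branch q' q'' →
      MemoLaRun w A q' i M M' r s → r ≠ .failure →
      MemoLaRun w A q i M (laRecord M' q i r) r (.call q i :: s ++ [r.elem])
  | branchFail {A : SubNFA Sigma S} {q q' q'' : S} {i : ℕ}
      {M M1 M2 : S × ℕ → Option LaVal} {r : LaResult} {s1 s2 : List (LaRunElem S)} :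
      M (q, i) = none → q ∉ A.F → A.T q = SubTrans.branch q' q'' →
      MemoLaRun w A q' i M M1 .failure s1 →
      MemoLaRun w A q'' i M1 M2 r s2 →
      MemoLaRun w A q i M (laRecord M2 q i r) r (.call q i :: s1 ++ s2 ++ [r.elem])
  | charSucc {A : SubNFA Sigma S} {q q' : S} {σ : Sigma} {i : ℕ}
      {M M' : S × ℕ → Option LaVal} {r : LaResult} {s : List (LaRunElem S)} :
      M (q, i) = none → q ∉ A.F → A.T q = SubTrans.char σ q' →
      w[i]? = some σ →
      MemoLaRun w A q' (i + 1) M M' r s →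
      MemoLaRun w A q i M (laRecord M' q i r) r (.call q i :: s ++ [r.elem])
  | charFail {A : SubNFA Sigma S} {q q' : S} {σ : Sigma} {i : ℕ}
      {M : S × ℕ → Option LaVal} :
      M (q, i) = none → q ∉ A.F → A.T q = SubTrans.char σ q' →
      w[i]? ≠ some σ →
      MemoLaRun w A q i M (laRecord M q i .failure) .failure [.call q i, .fail]
  | plaSucc {A A' : SubNFA Sigma S} {q q' : S} {i : ℕ}
      {M M1 M2 : S × ℕ → Option LaVal} {r1 r : LaResult} {s1 s2 : List (LaRunElem S)} :
      M (q, i) = none → q ∉ A.F → A.T q = SubTrans.sub Kind.pla A' q' →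
      MemoLaRun w A' A'.q0 i M M1 r1 s1 → r1 ≠ .failure →
      MemoLaRun w A q' i M1 M2 r s2 →
      MemoLaRun w A q i M (laRecord M2 q i r) r (.call q i :: s1 ++ s2 ++ [r.elem])
  | plaFail {A A' : SubNFA Sigma S} {q q' : S} {i : ℕ}
      {M M1 : S × ℕ → Option LaVal} {s1 : List (LaRunElem S)} :
      M (q, i) = none → q ∉ A.F → A.T q = SubTrans.sub Kind.pla A' q' →
      MemoLaRun w A' A'.q0 i M M1 .failure s1 →
      MemoLaRun w A q i M (laRecord M1 q i .failure) .failure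
        (.call q i :: s1 ++ [LaRunElem.fail])

/-! ## `Memo-at` -/

/-- Results of `Memo-at`: `SuccessAt(i', K)` with a set `K` of delayed memoization keys,
or `Failure(j)` with a nesting depth `j`. -/
inductive AtResult (S : Type) : Type where
  | successAt : ℕ → Finset (S × ℕ) → AtResult S
  | failure : ℕ → AtResult S

/-- Elements of runs of `Memo-at`: calls `C(q,i)`, memoization-table invocations
`M(q,i)`, and results `S(i')` and `F(j)`. -/
inductive AtRunElem (S : Type) : Type where
  | call : S → ℕ → AtRunElem S
  | memo : S → ℕ → AtRunElem S
  | succ : ℕ → AtRunElem S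
  | fail : ℕ → AtRunElem S
deriving DecidableEq

def AtRunElem.isRet : AtRunElem S → Bool
  | .succ _ => true
  | .fail _ => true
  | _ => false

def AtRunElem.isCall : AtRunElem S → Bool
  | .call _ _ => true
  | .memo _ _ => true
  | _ => false

def atMemoToCall : AtRunElem S → Option (AtRunElem S)
  | .memo q i => some (.call q i)
  | _ => none

def AtResult.elem {S : Type} : AtResult S → AtRunElem S
  | .successAt i _ => .succ i
  | .failure j => .fail j

/-- `f`, converting results of `Memo-at` to results of `Match-(la,at)`. -/
def AtResult.toResult {S : Type} : AtResult S → Result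
  | .successAt i _ => .successAt i
  | .failure _ => .failure

/-- The final step of `Memo-at`: on success, the key `(q,i)` is added to the set of
delayed keys. -/
def atFinal [DecidableEq S] (q : S) (i : ℕ) : AtResult S → AtResult S
  | .successAt i' K => .successAt i' (insert (q, i) K)
  | .failure j => .failure j

/-- The final recording of `Memo-at`: `M(q,i) := Failure(j)` if the result is
`Failure(j)`. -/
def atRecord [DecidableEq S] (M : S × ℕ → Option ℕ) (q : S) (i : ℕ) :
    AtResult S → (S × ℕ → Option ℕ)
  | .failure j => fun p => if p = (q, i) then some j else M p
  | _ => M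

/-- Batch recording `M(k) := Failure(j)` for every `k ∈ K`. -/
def atBatch [DecidableEq S] (M : S × ℕ → Option ℕ) (K : Finset (S × ℕ)) (j : ℕ) :
    S × ℕ → Option ℕ :=
  fun p => if p ∈ K then some j else M p

/-- Big-step semantics (with resulting memoization table and produced run) of the
memoized backtracking matching algorithm `Memo-at` for at-NFAs:
`MemoAtRun A0 w A q i M M' r s` means the call `Memo-at^M_{A0,A,w}(q, i)` (with the
whole automaton `A0` and current sub-automaton `A`) terminates with result `r`, final
memoization table `M'`, and produces the run `s`. -/
inductive MemoAtRun [DecidableEq S] (A0 : SubNFA Sigma S) (w : List Sigma) :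
    SubNFA Sigma S → S → ℕ → (S × ℕ → Option ℕ) → (S × ℕ → Option ℕ) →
    AtResult S → List (AtRunElem S) → Prop where
  | memoHit {A : SubNFA Sigma S} {q : S} {i j : ℕ} {M : S × ℕ → Option ℕ} :
      M (q, i) = some j →
      MemoAtRun A0 w A q i M M (.failure j) [.memo q i, .fail j]
  | accept {A : SubNFA Sigma S} {q : S} {i : ℕ} {M : S × ℕ → Option ℕ} :
      M (q, i) = none → q ∈ A.F →
      MemoAtRun A0 w A q i M M (.successAt i {(q, i)}) [.call q i, .succ i]
  | eps {A : SubNFA Sigma S} {q q' : S} {i : ℕ} {M M' : S × ℕ → Option ℕ}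
      {r : AtResult S} {s : List (AtRunElem S)} :
      M (q, i) = none → q ∉ A.F → A.T q = SubTrans.eps q' →
      MemoAtRun A0 w A q' i M M' r s →
      MemoAtRun A0 w A q i M (atRecord M' q i r) (atFinal q i r)
        (.call q i :: s ++ [r.elem])
  | branchNoBT {A : SubNFA Sigma S} {q q' q'' : S} {i : ℕ} {M M' : S × ℕ → Option ℕ}
      {r : AtResult S} {s : List (AtRunElem S)} :
      M (q, i) = none → q ∉ A.F → A.T q = SubTrans.branch q' q'' →
      MemoAtRun A0 w A q' i M M' r s →
      (∀ j, r = AtResult.failure j → j ≠ A0.nu q) →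
      MemoAtRun A0 w A q i M (atRecord M' q i r) (atFinal q i r)
        (.call q i :: s ++ [r.elem])
  | branchBTSucc {A : SubNFA Sigma S} {q q' q'' : S} {i i'' : ℕ} {K : Finset (S × ℕ)}
      {M M1 M2 : S × ℕ → Option ℕ} {s1 s2 : List (AtRunElem S)} :
      M (q, i) = none → q ∉ A.F → A.T q = SubTrans.branch q' q'' →
      MemoAtRun A0 w A q' i M M1 (.failure (A0.nu q)) s1 →
      MemoAtRun A0 w A q'' i M1 M2 (.successAt i'' K) s2 →
      MemoAtRun A0 w A q i M M2 (atFinal q i (.successAt i'' K))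
        (.call q i :: s1 ++ s2 ++ [AtRunElem.succ i''])
  | branchBTFail {A : SubNFA Sigma S} {q q' q'' : S} {i j' : ℕ}
      {M M1 M2 : S × ℕ → Option ℕ} {s1 s2 : List (AtRunElem S)} :
      M (q, i) = none → q ∉ A.F → A.T q = SubTrans.branch q' q'' →
      MemoAtRun A0 w A q' i M M1 (.failure (A0.nu q)) s1 →
      MemoAtRun A0 w A q'' i M1 M2 (.failure j') s2 →
      MemoAtRun A0 w A q i M (atRecord M2 q i (.failure (min (A0.nu q) j')))
        (.failure (min (A0.nu q) j'))
        (.call q i :: s1 ++ s2 ++ [AtRunElem.fail (min (A0.nu q) j')])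
  | charSucc {A : SubNFA Sigma S} {q q' : S} {σ : Sigma} {i : ℕ}
      {M M' : S × ℕ → Option ℕ} {r : AtResult S} {s : List (AtRunElem S)} :
      M (q, i) = none → q ∉ A.F → A.T q = SubTrans.char σ q' →
      w[i]? = some σ →
      MemoAtRun A0 w A q' (i + 1) M M' r s →
      MemoAtRun A0 w A q i M (atRecord M' q i r) (atFinal q i r)
        (.call q i :: s ++ [r.elem])
  | charFail {A : SubNFA Sigma S} {q q' : S} {σ : Sigma} {i : ℕ}
      {M : S × ℕ → Option ℕ} :
      M (q, i) = none → q ∉ A.F → A.T q = SubTrans.char σ q' →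
      w[i]? ≠ some σ →
      MemoAtRun A0 w A q i M (atRecord M q i (.failure (A0.nu q)))
        (.failure (A0.nu q)) [.call q i, .fail (A0.nu q)]
  | subSuccSucc {A A' : SubNFA Sigma S} {q q' : S} {i i' i'' : ℕ}
      {K' K'' : Finset (S × ℕ)} {M M1 M2 : S × ℕ → Option ℕ}
      {s1 s2 : List (AtRunElem S)} :
      M (q, i) = none → q ∉ A.F → A.T q = SubTrans.sub Kind.at A' q' →
      MemoAtRun A0 w A' A'.q0 i M M1 (.successAt i' K') s1 →
      MemoAtRun A0 w A q' i' M1 M2 (.successAt i'' K'') s2 →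
      MemoAtRun A0 w A q i M M2 (atFinal q i (.successAt i'' (K' ∪ K'')))
        (.call q i :: s1 ++ s2 ++ [AtRunElem.succ i''])
  | subSuccFail {A A' : SubNFA Sigma S} {q q' : S} {i i' j : ℕ} {K' : Finset (S × ℕ)}
      {M M1 M2 : S × ℕ → Option ℕ} {s1 s2 : List (AtRunElem S)} :
      M (q, i) = none → q ∉ A.F → A.T q = SubTrans.sub Kind.at A' q' →
      MemoAtRun A0 w A' A'.q0 i M M1 (.successAt i' K') s1 →
      MemoAtRun A0 w A q' i' M1 M2 (.failure j) s2 →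
      MemoAtRun A0 w A q i M (atRecord (atBatch M2 K' j) q i (.failure j)) (.failure j)
        (.call q i :: s1 ++ s2 ++ [AtRunElem.fail j])
  | subFailHigh {A A' : SubNFA Sigma S} {q q' : S} {i j : ℕ}
      {M M1 : S × ℕ → Option ℕ} {s1 : List (AtRunElem S)} :
      M (q, i) = none → q ∉ A.F → A.T q = SubTrans.sub Kind.at A' q' →
      MemoAtRun A0 w A' A'.q0 i M M1 (.failure j) s1 →
      A0.nu q < j →
      MemoAtRun A0 w A q i M (atRecord M1 q i (.failure (A0.nu q)))
        (.failure (A0.nu q)) (.call q i :: s1 ++ [AtRunElem.fail (A0.nu q)])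
  | subFailLow {A A' : SubNFA Sigma S} {q q' : S} {i j : ℕ}
      {M M1 : S × ℕ → Option ℕ} {s1 : List (AtRunElem S)} :
      M (q, i) = none → q ∉ A.F → A.T q = SubTrans.sub Kind.at A' q' →
      MemoAtRun A0 w A' A'.q0 i M M1 (.failure j) s1 →
      j ≤ A0.nu q →
      MemoAtRun A0 w A q i M (atRecord M1 q i (.failure j)) (.failure j)
        (.call q i :: s1 ++ [AtRunElem.fail j])

/-! ## The combined algorithm `Memo-(la,at)` -/

/-- Values of the memoization table of `Memo-(la,at)`: `Success` or `Failure(j)`. -/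
inductive LaAtVal : Type where
  | success : LaAtVal
  | failure : ℕ → LaAtVal

/-- Results of `Memo-(la,at)`: `SuccessAt(i', K)`, bare `Success`, or `Failure(j)`. -/
inductive LaAtResult (S : Type) : Type where
  | successAt : ℕ → Finset (S × ℕ) → LaAtResult S
  | success : LaAtResult S
  | failure : ℕ → LaAtResult S

def LaAtVal.toResult {S : Type} : LaAtVal → LaAtResult S
  | .success => .success
  | .failure j => .failure j

/-- `f`, converting results of `Memo-(la,at)` to results of `Match-(la,at)`
(undefined on the bare value `Success`). -/
def LaAtResult.toResult? {S : Type} : LaAtResult S → Option Result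
  | .successAt i _ => some (.successAt i)
  | .success => none
  | .failure _ => some .failure

def laAtFinal [DecidableEq S] (q : S) (i : ℕ) : LaAtResult S → LaAtResult S
  | .successAt i' K => .successAt i' (insert (q, i) K)
  | r => r

def laAtRecord [DecidableEq S] (M : S × ℕ → Option LaAtVal) (q : S) (i : ℕ) :
    LaAtResult S → (S × ℕ → Option LaAtVal)
  | .successAt _ _ => M
  | .success => fun p => if p = (q, i) then some LaAtVal.success else M p
  | .failure j => fun p => if p = (q, i) then some (LaAtVal.failure j) else M p

def laAtBatch [DecidableEq S] (M : S × ℕ → Option LaAtVal) (K : Finset (S × ℕ))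
    (v : LaAtVal) : S × ℕ → Option LaAtVal :=
  fun p => if p ∈ K then some v else M p

/-- Big-step semantics (with resulting memoization table and the number of recursive
calls made) of the combined memoized backtracking matching algorithm `Memo-(la,at)`:
`MemoLaAtRun w A0 A q i M M' r n` means the call `Memo-(la,at)^M_{A0,A,w}(q, i)`
terminates with result `r`, final memoization table `M'`, making `n` calls in total.
On a positive look-ahead transition, the sub-automaton becomes the new whole automaton
(so nesting depths of atomic grouping are reset by look-around operators). -/
inductive MemoLaAtRun [DecidableEq S] (w : List Sigma) :
    SubNFA Sigma S → SubNFA Sigma S → S → ℕ →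
    (S × ℕ → Option LaAtVal) → (S × ℕ → Option LaAtVal) → LaAtResult S → ℕ → Prop where
  | memoHit {A0 A : SubNFA Sigma S} {q : S} {i : ℕ} {M : S × ℕ → Option LaAtVal}
      {v : LaAtVal} :
      M (q, i) = some v →
      MemoLaAtRun w A0 A q i M M v.toResult 1
  | accept {A0 A : SubNFA Sigma S} {q : S} {i : ℕ} {M : S × ℕ → Option LaAtVal} :
      M (q, i) = none → q ∈ A.F →
      MemoLaAtRun w A0 A q i M M (.successAt i {(q, i)}) 1
  | eps {A0 A : SubNFA Sigma S} {q q' : S} {i : ℕ} {M M' : S × ℕ → Option LaAtVal}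
      {r : LaAtResult S} {n : ℕ} :
      M (q, i) = none → q ∉ A.F → A.T q = SubTrans.eps q' →
      MemoLaAtRun w A0 A q' i M M' r n →
      MemoLaAtRun w A0 A q i M (laAtRecord M' q i (laAtFinal q i r)) (laAtFinal q i r)
        (n + 1)
  | branchNoBT {A0 A : SubNFA Sigma S} {q q' q'' : S} {i : ℕ}
      {M M' : S × ℕ → Option LaAtVal} {r : LaAtResult S} {n : ℕ} :
      M (q, i) = none → q ∉ A.F → A.T q = SubTrans.branch q' q'' →
      MemoLaAtRun w A0 A q' i M M' r n →
      (∀ j, r = LaAtResult.failure j → j ≠ A0.nu q) →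
      MemoLaAtRun w A0 A q i M (laAtRecord M' q i (laAtFinal q i r)) (laAtFinal q i r)
        (n + 1)
  | branchBTFail {A0 A : SubNFA Sigma S} {q q' q'' : S} {i j' : ℕ}
      {M M1 M2 : S × ℕ → Option LaAtVal} {n1 n2 : ℕ} :
      M (q, i) = none → q ∉ A.F → A.T q = SubTrans.branch q' q'' →
      MemoLaAtRun w A0 A q' i M M1 (.failure (A0.nu q)) n1 →
      MemoLaAtRun w A0 A q'' i M1 M2 (.failure j') n2 →
      MemoLaAtRun w A0 A q i M
        (laAtRecord M2 q i (.failure (min (A0.nu q) j')))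
        (.failure (min (A0.nu q) j')) (n1 + n2 + 1)
  | branchBTOther {A0 A : SubNFA Sigma S} {q q' q'' : S} {i : ℕ}
      {M M1 M2 : S × ℕ → Option LaAtVal} {r : LaAtResult S} {n1 n2 : ℕ} :
      M (q, i) = none → q ∉ A.F → A.T q = SubTrans.branch q' q'' →
      MemoLaAtRun w A0 A q' i M M1 (.failure (A0.nu q)) n1 →
      MemoLaAtRun w A0 A q'' i M1 M2 r n2 →
      (∀ j, r ≠ LaAtResult.failure j) →
      MemoLaAtRun w A0 A q i M (laAtRecord M2 q i (laAtFinal q i r)) (laAtFinal q i r)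
        (n1 + n2 + 1)
  | charSucc {A0 A : SubNFA Sigma S} {q q' : S} {σ : Sigma} {i : ℕ}
      {M M' : S × ℕ → Option LaAtVal} {r : LaAtResult S} {n : ℕ} :
      M (q, i) = none → q ∉ A.F → A.T q = SubTrans.char σ q' →
      w[i]? = some σ →
      MemoLaAtRun w A0 A q' (i + 1) M M' r n →
      MemoLaAtRun w A0 A q i M (laAtRecord M' q i (laAtFinal q i r)) (laAtFinal q i r)
        (n + 1)
  | charFail {A0 A : SubNFA Sigma S} {q q' : S} {σ : Sigma} {i : ℕ}
      {M : S × ℕ → Option LaAtVal} :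
      M (q, i) = none → q ∉ A.F → A.T q = SubTrans.char σ q' →
      w[i]? ≠ some σ →
      MemoLaAtRun w A0 A q i M (laAtRecord M q i (.failure (A0.nu q)))
        (.failure (A0.nu q)) 1
  | plaSuccAt {A0 A A' : SubNFA Sigma S} {q q' : S} {i i' : ℕ} {K' : Finset (S × ℕ)}
      {M M1 M2 : S × ℕ → Option LaAtVal} {r : LaAtResult S} {n1 n2 : ℕ} :
      M (q, i) = none → q ∉ A.F → A.T q = SubTrans.sub Kind.pla A' q' →
      MemoLaAtRun w A' A' A'.q0 i M M1 (.successAt i' K') n1 →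
      MemoLaAtRun w A0 A q' i (laAtBatch M1 K' LaAtVal.success) M2 r n2 →
      MemoLaAtRun w A0 A q i M (laAtRecord M2 q i (laAtFinal q i r)) (laAtFinal q i r)
        (n1 + n2 + 1)
  | plaBare {A0 A A' : SubNFA Sigma S} {q q' : S} {i : ℕ}
      {M M1 M2 : S × ℕ → Option LaAtVal} {r : LaAtResult S} {n1 n2 : ℕ} :
      M (q, i) = none → q ∉ A.F → A.T q = SubTrans.sub Kind.pla A' q' →
      MemoLaAtRun w A' A' A'.q0 i M M1 .success n1 →
      MemoLaAtRun w A0 A q' i M1 M2 r n2 →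
      MemoLaAtRun w A0 A q i M (laAtRecord M2 q i (laAtFinal q i r)) (laAtFinal q i r)
        (n1 + n2 + 1)
  | plaFail {A0 A A' : SubNFA Sigma S} {q q' : S} {i j : ℕ}
      {M M1 : S × ℕ → Option LaAtVal} {n1 : ℕ} :
      M (q, i) = none → q ∉ A.F → A.T q = SubTrans.sub Kind.pla A' q' →
      MemoLaAtRun w A' A' A'.q0 i M M1 (.failure j) n1 →
      MemoLaAtRun w A0 A q i M (laAtRecord M1 q i (.failure (A0.nu q)))
        (.failure (A0.nu q)) (n1 + 1)
  | atSuccSucc {A0 A A' : SubNFA Sigma S} {q q' : S} {i i' i'' : ℕ}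
      {K' K'' : Finset (S × ℕ)} {M M1 M2 : S × ℕ → Option LaAtVal} {n1 n2 : ℕ} :
      M (q, i) = none → q ∉ A.F → A.T q = SubTrans.sub Kind.at A' q' →
      MemoLaAtRun w A0 A' A'.q0 i M M1 (.successAt i' K') n1 →
      MemoLaAtRun w A0 A q' i' M1 M2 (.successAt i'' K'') n2 →
      MemoLaAtRun w A0 A q i M M2
        (laAtFinal q i (.successAt i'' (K' ∪ K''))) (n1 + n2 + 1)
  | atSuccBare {A0 A A' : SubNFA Sigma S} {q q' : S} {i i' : ℕ} {K' : Finset (S × ℕ)}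
      {M M1 M2 : S × ℕ → Option LaAtVal} {n1 n2 : ℕ} :
      M (q, i) = none → q ∉ A.F → A.T q = SubTrans.sub Kind.at A' q' →
      MemoLaAtRun w A0 A' A'.q0 i M M1 (.successAt i' K') n1 →
      MemoLaAtRun w A0 A q' i' M1 M2 .success n2 →
      MemoLaAtRun w A0 A q i M
        (laAtRecord (laAtBatch M2 K' LaAtVal.success) q i .success) .success
        (n1 + n2 + 1)
  | atSuccFail {A0 A A' : SubNFA Sigma S} {q q' : S} {i i' j : ℕ} {K' : Finset (S × ℕ)}
      {M M1 M2 : S × ℕ → Option LaAtVal} {n1 n2 : ℕ} :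
      M (q, i) = none → q ∉ A.F → A.T q = SubTrans.sub Kind.at A' q' →
      MemoLaAtRun w A0 A' A'.q0 i M M1 (.successAt i' K') n1 →
      MemoLaAtRun w A0 A q' i' M1 M2 (.failure j) n2 →
      MemoLaAtRun w A0 A q i M
        (laAtRecord (laAtBatch M2 K' (LaAtVal.failure j)) q i (.failure j))
        (.failure j) (n1 + n2 + 1)
  | atBare {A0 A A' : SubNFA Sigma S} {q q' : S} {i : ℕ}
      {M M1 : S × ℕ → Option LaAtVal} {n1 : ℕ} :
      M (q, i) = none → q ∉ A.F → A.T q = SubTrans.sub Kind.at A' q' →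
      MemoLaAtRun w A0 A' A'.q0 i M M1 .success n1 →
      MemoLaAtRun w A0 A q i M (laAtRecord M1 q i .success) .success (n1 + 1)
  | atFailHigh {A0 A A' : SubNFA Sigma S} {q q' : S} {i j : ℕ}
      {M M1 : S × ℕ → Option LaAtVal} {n1 : ℕ} :
      M (q, i) = none → q ∉ A.F → A.T q = SubTrans.sub Kind.at A' q' →
      MemoLaAtRun w A0 A' A'.q0 i M M1 (.failure j) n1 →
      A0.nu q < j →
      MemoLaAtRun w A0 A q i M (laAtRecord M1 q i (.failure (A0.nu q)))
        (.failure (A0.nu q)) (n1 + 1)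
  | atFailLow {A0 A A' : SubNFA Sigma S} {q q' : S} {i j : ℕ}
      {M M1 : S × ℕ → Option LaAtVal} {n1 : ℕ} :
      M (q, i) = none → q ∉ A.F → A.T q = SubTrans.sub Kind.at A' q' →
      MemoLaAtRun w A0 A' A'.q0 i M M1 (.failure j) n1 →
      j ≤ A0.nu q →
      MemoLaAtRun w A0 A q i M (laAtRecord M1 q i (.failure j)) (.failure j) (n1 + 1)

/-!
While a call is pending, every call nested below it lies strictly further along: it is inside a
proper sub-automaton, whose states are disjoint from the top-level states of the current automaton,
or at a later input position of the same automaton, or it is reached by at least one ε-step at the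
same position. This "further along" relation is transitive, and because states are disjoint and
there are no ε-loops it never relates two calls with the same key `(q, i)`. Since a run is
well-nested, the segment delimited by `φ` consists of the calls nested below the pending one and
its result.
-/

theorem getElem?_and_drop_of_drop_eq_cons {l t : List α} {a : α} {n : ℕ}
    (h : l.drop n = a :: t) : l[n]? = some a ∧ l.drop (n + 1) = t := by
  constructor
  · rw [← List.head?_drop, h, List.head?_cons]
  · rw [← List.tail_drop, h, List.tail_cons]

section Phi

variable {isRet : α → Bool} {s : List α} {e : α} {ℓ n : ℕ}

theorem phiAux_of_not_isRet (hs : s[ℓ]? = some e) (he : isRet e = false) :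
    phiAux isRet s ℓ n = phiAux isRet s (ℓ + 1) (n + 1) := by
  rw [phiAux]
  split <;> simp_all

theorem phiAux_of_isRet_of_le_one (hs : s[ℓ]? = some e) (he : isRet e = true) (hn : n ≤ 1) :
    phiAux isRet s ℓ n = some ℓ := by
  rw [phiAux]
  split <;> simp_all

theorem phiAux_of_isRet_of_one_lt (hs : s[ℓ]? = some e) (he : isRet e = true) (hn : 1 < n) :
    phiAux isRet s ℓ n = phiAux isRet s (ℓ + 1) (n - 1) := by
  rw [phiAux]
  split <;> simp_all [Nat.not_le.2 hn]

end Phi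

theorem LaResult.isRet_elem (r : LaResult) : (r.elem : LaRunElem S).isRet = true := by
  cases r <;> rfl

theorem LaResult.elem_ne_call (r : LaResult) (q : S) (i : ℕ) : r.elem ≠ LaRunElem.call q i := by
  cases r <;> nofun

theorem LaResult.elem_ne_memo (r : LaResult) (q : S) (i : ℕ) : r.elem ≠ LaRunElem.memo q i := by
  cases r <;> nofun

/-- `CallSeq key R P s`: the list `s` records a sequence of completed calls, each to some `d` with
`P d`, whose key `(q, i)` is `key d`; the calls made while the call to `d` is pending are in turn
to elements `R`-related to `d`. A call answered by the memoization table has no nested calls. -/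
inductive CallSeq {γ : Type} (key : γ → S × ℕ) (R : γ → γ → Prop) :
    (γ → Prop) → List (LaRunElem S) → Prop where
  | nil {P : γ → Prop} : CallSeq key R P []
  | memo {P : γ → Prop} {d : γ} {v : List (LaRunElem S)} (r : LaResult) :
      P d → CallSeq key R P v →
      CallSeq key R P (.memo (key d).1 (key d).2 :: r.elem :: v)
  | call {P : γ → Prop} {d : γ} {u v : List (LaRunElem S)} (r : LaResult) :
      P d → CallSeq key R (R d) u → CallSeq key R P v →
      CallSeq key R P (.call (key d).1 (key d).2 :: (u ++ r.elem :: v))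

namespace CallSeq

variable {γ : Type} {key : γ → S × ℕ} {R : γ → γ → Prop} {P : γ → Prop}
  {s u v : List (LaRunElem S)} {q : S} {i : ℕ}

theorem append (hu : CallSeq key R P u) (hv : CallSeq key R P v) :
    CallSeq key R P (u ++ v) := by
  induction hu with
  | nil => exact hv
  | memo r hd _ ih => exact .memo r hd (ih hv)
  | call r hd hbody _ _ ih =>
    simpa only [List.cons_append, List.append_assoc] using CallSeq.call r hd hbody (ih hv)

theorem exists_key_eq (hu : CallSeq key R P u) (hR : ∀ c d e, R c d → R d e → R c e)
    (hP : ∀ c d, P c → R c d → P d)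
    (hmem : LaRunElem.call q i ∈ u ∨ LaRunElem.memo q i ∈ u) :
    ∃ d, P d ∧ key d = (q, i) := by
  induction hu with
  | nil => simp at hmem
  | @memo P d v r hd _ ih =>
    simp only [List.mem_cons, reduceCtorEq, false_or, LaRunElem.memo.injEq,
      (r.elem_ne_call q i).symm, (r.elem_ne_memo q i).symm] at hmem
    rcases hmem with hv | ⟨rfl, rfl⟩ | hv
    · exact ih hP (.inl hv)
    · exact ⟨d, hd, rfl⟩
    · exact ih hP (.inr hv)
  | @call P d u v r hd _ _ ihbody ih =>
    have hcases : (key d = (q, i)) ∨ (LaRunElem.call q i ∈ u ∨ LaRunElem.memo q i ∈ u) ∨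
        (LaRunElem.call q i ∈ v ∨ LaRunElem.memo q i ∈ v) := by
      simp only [List.mem_cons, List.mem_append, reduceCtorEq, false_or, LaRunElem.call.injEq,
        (r.elem_ne_call q i).symm, (r.elem_ne_memo q i).symm] at hmem
      grind
    rcases hcases with hkey | hbody | hv
    · exact ⟨d, hd, hkey⟩
    · obtain ⟨e, hde, hkey⟩ := ihbody (hR d) hbody
      exact ⟨e, hP d e hd hde, hkey⟩
    · exact ih hP hv

theorem phiAux_skip (hu : CallSeq key R P u) {ℓ n : ℕ} (hn : 1 ≤ n) (hs : s.drop ℓ = u ++ v) :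
    phiAux LaRunElem.isRet s ℓ n = phiAux LaRunElem.isRet s (ℓ + u.length) n := by
  induction hu generalizing ℓ n v with
  | nil => rfl
  | @memo _ d u r _ _ ih =>
    obtain ⟨hmemo, hs⟩ := getElem?_and_drop_of_drop_eq_cons hs
    obtain ⟨hret, hs⟩ := getElem?_and_drop_of_drop_eq_cons hs
    calc phiAux LaRunElem.isRet s ℓ n
        = phiAux LaRunElem.isRet s (ℓ + 1) (n + 1) := phiAux_of_not_isRet hmemo rfl
      _ = phiAux LaRunElem.isRet s (ℓ + 1 + 1) n :=
          phiAux_of_isRet_of_one_lt hret r.isRet_elem (by lia)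
      _ = phiAux LaRunElem.isRet s (ℓ + 1 + 1 + u.length) n := ih hn hs
      _ = _ := by simp only [List.length_cons]; congr 1; lia
  | @call _ d u w r _ _ _ ihbody ih =>
    obtain ⟨hcall, hs⟩ := getElem?_and_drop_of_drop_eq_cons hs
    replace hs : s.drop (ℓ + 1) = u ++ (r.elem :: w ++ v) := hs.trans (List.append_assoc ..)
    have hs' : s.drop (ℓ + 1 + u.length) = r.elem :: (w ++ v) := by
      rw [← List.drop_drop, hs, List.drop_left, List.cons_append]
    obtain ⟨hret, hw⟩ := getElem?_and_drop_of_drop_eq_cons hs'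
    calc phiAux LaRunElem.isRet s ℓ n
        = phiAux LaRunElem.isRet s (ℓ + 1) (n + 1) := phiAux_of_not_isRet hcall rfl
      _ = phiAux LaRunElem.isRet s (ℓ + 1 + u.length) (n + 1) := ihbody (by lia) hs
      _ = phiAux LaRunElem.isRet s (ℓ + 1 + u.length + 1) n :=
          phiAux_of_isRet_of_one_lt hret r.isRet_elem (by lia)
      _ = phiAux LaRunElem.isRet s (ℓ + 1 + u.length + 1 + w.length) n := ih hn hw
      _ = _ := by simp only [List.length_cons, List.length_append]; congr 1; lia

theorem exists_body (hs : CallSeq key R P s) {ℓ : ℕ} (hc : s[ℓ]? = some (.call q i)) :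
    ∃ d u v, ∃ r : LaResult, key d = (q, i) ∧ CallSeq key R (R d) u ∧
      s.drop (ℓ + 1) = u ++ r.elem :: v := by
  induction hs generalizing ℓ with
  | nil => simp at hc
  | memo r _ _ ih =>
    match ℓ with
    | 0 => simp at hc
    | 1 => simp [r.elem_ne_call] at hc
    | ℓ + 2 => exact ih hc
  | @call _ d u v r _ hbody _ ihbody ih =>
    match ℓ with
    | 0 =>
      obtain ⟨rfl, rfl⟩ : (key d).1 = q ∧ (key d).2 = i := by simpa using hc
      exact ⟨d, u, v, r, rfl, hbody, rfl⟩
    | ℓ + 1 =>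
      rw [List.getElem?_cons_succ] at hc
      rcases lt_trichotomy ℓ u.length with hlt | rfl | hgt
      · rw [List.getElem?_append_left hlt] at hc
        obtain ⟨d', u', v', r', hkey, hbody', hdrop⟩ := ihbody hc
        refine ⟨d', u', v' ++ r.elem :: v, r', hkey, hbody', ?_⟩
        rw [List.drop_succ_cons, List.drop_append_of_le_length hlt, hdrop,
          List.append_assoc, List.cons_append]
      · simp [r.elem_ne_call] at hc
      · obtain ⟨k, rfl⟩ := Nat.exists_eq_add_of_lt hgt
        rw [List.getElem?_append_right (by lia), show u.length + k + 1 - u.length = k + 1 by lia,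
          List.getElem?_cons_succ] at hc
        obtain ⟨d', u', v', r', hkey, hbody', hdrop⟩ := ih hc
        refine ⟨d', u', v', r', hkey, hbody', ?_⟩
        rw [List.drop_succ_cons, show u.length + k + 1 + 1 = u.length + (k + 2) by lia,
          List.drop_length_add_append, List.drop_succ_cons, hdrop]

theorem no_reentry (hs : CallSeq key R P s) (hR : ∀ c d e, R c d → R d e → R c e)
    (hkey : ∀ c d, R c d → key c ≠ key d) {ℓ m ℓ' : ℕ} (hc : s[ℓ]? = some (.call q i))
    (hφ : phi LaRunElem.isRet s ℓ = some m) (hℓ : ℓ < ℓ') (hm : ℓ' ≤ m) :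
    s[ℓ']? ≠ some (.call q i) ∧ s[ℓ']? ≠ some (.memo q i) := by
  obtain ⟨d, u, v, r, hd, hbody, hdrop⟩ := hs.exists_body hc
  have hret : s[ℓ + 1 + u.length]? = some r.elem := by
    rw [← List.getElem?_drop, hdrop]; simp
  have hφu : phi LaRunElem.isRet s ℓ = some (ℓ + 1 + u.length) :=
    calc phiAux LaRunElem.isRet s ℓ 0
        = phiAux LaRunElem.isRet s (ℓ + 1) 1 := phiAux_of_not_isRet hc rfl
      _ = phiAux LaRunElem.isRet s (ℓ + 1 + u.length) 1 := hbody.phiAux_skip le_rfl hdrop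
      _ = some (ℓ + 1 + u.length) := phiAux_of_isRet_of_le_one hret r.isRet_elem le_rfl
  obtain rfl : ℓ + 1 + u.length = m := Option.some.inj (hφu.symm.trans hφ)
  have hnot : ¬(LaRunElem.call q i ∈ u ∨ LaRunElem.memo q i ∈ u) := fun hmem ↦ by
    obtain ⟨e, hde, he⟩ := hbody.exists_key_eq hR (fun c e ↦ hR d c e) hmem
    exact hkey d e hde (hd.trans he.symm)
  rcases hm.lt_or_eq with hlt | rfl
  · obtain ⟨k, rfl⟩ := Nat.exists_eq_add_of_le (Nat.succ_le_of_lt hℓ)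
    rw [Nat.succ_eq_add_one, ← List.getElem?_drop, hdrop, List.getElem?_append_left (by lia)]
    exact ⟨fun h ↦ hnot (.inl (List.mem_of_getElem? h)),
      fun h ↦ hnot (.inr (List.mem_of_getElem? h))⟩
  · simp [hret, r.elem_ne_call, r.elem_ne_memo]

end CallSeq

namespace SubNFA

variable {A A' : SubNFA Sigma S} {q q' : S} {k : Kind}

/-- The states of the proper sub-automata of `A`, at any depth. -/
def properStates (A : SubNFA Sigma S) : List S :=
  A.comps.tail.flatMap SubNFA.Q

theorem comps_eq_cons (A : SubNFA Sigma S) : A.comps = A :: A.comps.tail := by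
  cases A
  simp [comps, compsD]

theorem mem_comps_self (A : SubNFA Sigma S) : A ∈ A.comps := by
  rw [comps_eq_cons]
  exact List.mem_cons_self

theorem allStates_eq_append (A : SubNFA Sigma S) : A.allStates = A.Q ++ A.properStates := by
  rw [allStates, comps_eq_cons, List.flatMap_cons, properStates]

theorem comps_sublist_of_T_eq_sub (hq : q ∈ A.Q) (hT : A.T q = .sub k A' q') :
    A'.comps.Sublist A.comps.tail := by
  have hcomps : A.comps.tail = A.Q.flatMap fun p ↦ (A.T p).subCompsD.map Prod.fst := by
    cases A
    simp [comps, compsD, List.map_flatMap, Q, T]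
  have hsub : A'.comps = (A.T q).subCompsD.map Prod.fst := by
    simp [hT, SubTrans.subCompsD, comps, Function.comp_def]
  rw [hcomps, hsub, List.flatMap_def]
  exact List.sublist_flatten_of_mem (List.mem_map_of_mem hq)

theorem comps_subset_of_T_eq_sub (hq : q ∈ A.Q) (hT : A.T q = .sub k A' q') :
    A'.comps ⊆ A.comps :=
  ((comps_sublist_of_T_eq_sub hq hT).trans (List.tail_sublist _)).subset

theorem allStates_sublist_of_T_eq_sub (hq : q ∈ A.Q) (hT : A.T q = .sub k A' q') :
    A'.allStates.Sublist A.properStates :=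
  (comps_sublist_of_T_eq_sub hq hT).flatMap _

theorem epsStep_of_T (hq : q ∈ A.Q) (hF : q ∉ A.F)
    (hT : A.T q = .eps q' ∨ (∃ q'', A.T q = .branch q' q'') ∨ (∃ q'', A.T q = .branch q'' q') ∨
      ∃ k A'', A.T q = .sub k A'' q' ∧ k ≠ .at) :
    A.epsStep q q' :=
  ⟨A, A.mem_comps_self, hq, hF, hT⟩

theorem WF.localOK (h : A.WF) : A.LocalOK :=
  h.1 A A.mem_comps_self

theorem WF.notMem_properStates (h : A.WF) (hq : q ∈ A.Q) : q ∉ A.properStates := by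
  have hnodup := h.2
  rw [allStates_eq_append] at hnodup
  exact List.disjoint_of_nodup_append hnodup hq

theorem WF.of_T_eq_sub (h : A.WF) (hq : q ∈ A.Q) (hT : A.T q = .sub k A' q') : A'.WF :=
  ⟨fun B hB ↦ h.1 B (comps_subset_of_T_eq_sub hq hT hB),
    h.2.sublist (((comps_sublist_of_T_eq_sub hq hT).trans (List.tail_sublist _)).flatMap _)⟩

theorem NoEpsLoops.of_T_eq_sub (h : A.NoEpsLoops) (hq : q ∈ A.Q) (hT : A.T q = .sub k A' q') :
    A'.NoEpsLoops :=
  fun p hp ↦ h p <| Relation.TransGen.mono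
    (fun _ _ ⟨B, hB, hstep⟩ ↦ ⟨B, comps_subset_of_T_eq_sub hq hT hB, hstep⟩) p p hp

end SubNFA

/-- A configuration `(A, q, i)` of `Memo-la`: a well-formed automaton without ε-loops, one of its
top-level states, and an input position. -/
structure Config (Sigma S : Type) where
  aut : SubNFA Sigma S
  state : S
  pos : ℕ
  wf : aut.WF
  noEpsLoops : aut.NoEpsLoops
  mem : state ∈ aut.Q

namespace Config

/-- The memoization key `(q, i)` of a configuration. -/
def key (c : Config Sigma S) : S × ℕ := (c.state, c.pos)

/-- `c.Precedes d`: the call to `d` may be nested in the call to `c`, as `d` lies in a proper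
sub-automaton, or in the same automaton at a later position, or in the same automaton at the same
position but at least one ε-step ahead. -/
def Precedes (c d : Config Sigma S) : Prop :=
  d.aut.allStates ⊆ c.aut.properStates ∨
    d.aut = c.aut ∧
      (c.pos < d.pos ∨ c.pos = d.pos ∧ Relation.TransGen c.aut.epsStep c.state d.state)

variable {c d e : Config Sigma S}

theorem Precedes.trans (hcd : c.Precedes d) (hde : d.Precedes e) : c.Precedes e := by
  have hproper : d.aut.properStates ⊆ d.aut.allStates := by
    rw [SubNFA.allStates_eq_append]
    exact List.subset_append_right _ _
  rcases hcd with hcd | ⟨hautd, hcd⟩ <;> rcases hde with hde | ⟨haute, hde⟩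
  · exact .inl (List.Subset.trans hde (List.Subset.trans hproper hcd))
  · exact .inl (haute ▸ hcd)
  · exact .inl (hautd ▸ hde)
  · refine .inr ⟨haute.trans hautd, ?_⟩
    rw [hautd] at hde
    rcases hcd with hcd | ⟨hcd, hεcd⟩ <;> rcases hde with hde | ⟨hde, hεde⟩
    · exact .inl (hcd.trans hde)
    · exact .inl (hde ▸ hcd)
    · exact .inl (hcd ▸ hde)
    · exact .inr ⟨hcd.trans hde, hεcd.trans hεde⟩

theorem Precedes.key_ne (h : c.Precedes d) : c.key ≠ d.key := by
  intro hkey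
  obtain ⟨hstate, hpos⟩ : c.state = d.state ∧ c.pos = d.pos := Prod.mk.inj hkey
  rcases h with hsub | ⟨-, hlt | ⟨-, hε⟩⟩
  · have hmem : d.state ∈ d.aut.allStates := by
      rw [SubNFA.allStates_eq_append]
      exact List.mem_append_left _ d.mem
    exact c.wf.notMem_properStates c.mem (hstate ▸ hsub hmem)
  · exact hlt.ne hpos
  · exact c.noEpsLoops c.state (hstate ▸ hε)

section Mk

variable {A A' : SubNFA Sigma S} {q q' : S} {k : Kind} {i : ℕ} {hWF : A.WF} {hLoop : A.NoEpsLoops}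
  {hq : q ∈ A.Q}

theorem precedes_of_epsStep {hq' : q' ∈ A.Q} (h : A.epsStep q q') :
    Precedes ⟨A, q, i, hWF, hLoop, hq⟩ ⟨A, q', i, hWF, hLoop, hq'⟩ :=
  .inr ⟨rfl, .inr ⟨rfl, .single h⟩⟩

theorem precedes_succ_pos {hq' : q' ∈ A.Q} :
    Precedes ⟨A, q, i, hWF, hLoop, hq⟩ ⟨A, q', i + 1, hWF, hLoop, hq'⟩ :=
  .inr ⟨rfl, .inl i.lt_succ_self⟩

theorem precedes_of_T_eq_sub {p : S} {j : ℕ} {hWF' : A'.WF} {hLoop' : A'.NoEpsLoops}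
    {hp : p ∈ A'.Q} (hT : A.T q = .sub k A' q') :
    Precedes ⟨A, q, i, hWF, hLoop, hq⟩ ⟨A', p, j, hWF', hLoop', hp⟩ :=
  .inl (SubNFA.allStates_sublist_of_T_eq_sub hq hT).subset

end Mk

end Config

theorem MemoLaRun.callSeq [DecidableEq S] {w : List Sigma} {A : SubNFA Sigma S} {q : S} {i : ℕ}
    {M M' : S × ℕ → Option LaVal} {r : LaResult} {s : List (LaRunElem S)}
    (h : MemoLaRun w A q i M M' r s) (hWF : A.WF) (hLoop : A.NoEpsLoops) (hq : q ∈ A.Q)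
    {P : Config Sigma S → Prop} (hP : P ⟨A, q, i, hWF, hLoop, hq⟩) :
    CallSeq Config.key Config.Precedes P s := by
  induction h generalizing P with
  | memoHit => exact .memo _ hP .nil
  | accept => exact .call (.successAt _) hP .nil .nil
  | eps _ hF hT _ ih =>
    have hq' := hT ▸ hWF.localOK.2.2 _ hq hF
    have hε := SubNFA.epsStep_of_T hq hF (.inl hT)
    exact .call _ hP (ih hWF hLoop hq' (Config.precedes_of_epsStep hε)) .nil
  | branchNoFail _ hF hT _ _ ih =>
    have hq' := hT ▸ hWF.localOK.2.2 _ hq hF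
    have hε := SubNFA.epsStep_of_T hq hF (.inr (.inl ⟨_, hT⟩))
    exact .call _ hP (ih hWF hLoop hq'.1 (Config.precedes_of_epsStep hε)) .nil
  | branchFail _ hF hT _ _ ih₁ ih₂ =>
    have hq' := hT ▸ hWF.localOK.2.2 _ hq hF
    have hε₁ := SubNFA.epsStep_of_T hq hF (.inr (.inl ⟨_, hT⟩))
    have hε₂ := SubNFA.epsStep_of_T hq hF (.inr (.inr (.inl ⟨_, hT⟩)))
    exact .call _ hP (.append (ih₁ hWF hLoop hq'.1 (Config.precedes_of_epsStep hε₁))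
      (ih₂ hWF hLoop hq'.2 (Config.precedes_of_epsStep hε₂))) .nil
  | charSucc _ hF hT _ _ ih =>
    have hq' := hT ▸ hWF.localOK.2.2 _ hq hF
    exact .call _ hP (ih hWF hLoop hq' Config.precedes_succ_pos) .nil
  | charFail => exact .call .failure hP .nil .nil
  | plaSucc _ hF hT _ _ _ ih₁ ih₂ =>
    have hq' := hT ▸ hWF.localOK.2.2 _ hq hF
    have hWF' := hWF.of_T_eq_sub hq hT
    have hε := SubNFA.epsStep_of_T hq hF (.inr (.inr (.inr ⟨_, _, hT, nofun⟩)))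
    exact .call _ hP (.append
      (ih₁ hWF' (hLoop.of_T_eq_sub hq hT) hWF'.localOK.1 (Config.precedes_of_T_eq_sub hT))
      (ih₂ hWF hLoop hq' (Config.precedes_of_epsStep hε))) .nil
  | plaFail _ _ hT _ ih =>
    have hWF' := hWF.of_T_eq_sub hq hT
    exact .call .failure hP (ih hWF' (hLoop.of_T_eq_sub hq hT) hWF'.localOK.1
      (Config.precedes_of_T_eq_sub hT)) .nil

theorem memoLa_no_reentry_general [DecidableEq S] {A : SubNFA Sigma S} (hWF : A.WF)
    (hLoop : A.NoEpsLoops) {w : List Sigma} {q₀ : S} (hq₀ : q₀ ∈ A.Q) {i₀ : ℕ}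
    {M M' : S × ℕ → Option LaVal} {r : LaResult} {s : List (LaRunElem S)}
    (hrun : MemoLaRun w A q₀ i₀ M M' r s) {q : S} {i ℓ m : ℕ}
    (hc : s[ℓ]? = some (LaRunElem.call q i)) (hφ : phi LaRunElem.isRet s ℓ = some m) :
    ∀ ℓ', ℓ + 1 ≤ ℓ' → ℓ' ≤ m →
      s[ℓ']? ≠ some (LaRunElem.call q i) ∧ s[ℓ']? ≠ some (LaRunElem.memo q i) := by
  have hseq := hrun.callSeq hWF hLoop hq₀ (P := fun _ ↦ True) trivial
  exact fun ℓ' ↦ hseq.no_reentry (fun _ _ _ ↦ Config.Precedes.trans)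
    (fun _ _ ↦ Config.Precedes.key_ne) hc hφ

/-- **Lemma 7** (no re-entry during a pending call of `Memo-la`): for every run `s` of
an execution of `Memo-la` and every index `ℓ` with `s[ℓ] = C(q, i)`, neither `C(q, i)`
nor `M(q, i)` appears in the subsequence `s[ℓ+1] … s[φ_s(ℓ)]`. -/
theorem memoLa_no_reentry {Sigma S : Type} [DecidableEq S]
    (A : SubNFA Sigma S) (hWF : A.WF) (hLa : A.IsLaNFA) (hLoop : A.NoEpsLoops)
    (w : List Sigma) (i0 : ℕ) (hi0 : i0 ≤ w.length)
    {M' : S × ℕ → Option LaVal} {r : LaResult} {s : List (LaRunElem S)}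
    (hrun : MemoLaRun w A A.q0 i0 (fun _ => none) M' r s)
    {q : S} {i ℓ m : ℕ}
    (hc : s[ℓ]? = some (LaRunElem.call q i))
    (hφ : phi LaRunElem.isRet s ℓ = some m) :
    ∀ ℓ', ℓ + 1 ≤ ℓ' → ℓ' ≤ m →
      s[ℓ']? ≠ some (LaRunElem.call q i) ∧ s[ℓ']? ≠ some (LaRunElem.memo q i) :=
  memoLa_no_reentry_general hWF hLoop hWF.localOK.1 hrun hc hφ

end RegexMemo
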